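/- arXiv:2509.21112 — 2 statements merged into one kernel-verified Lean document; each statement's English description precedes it below -/
import Mathlib

section
/- Let γ ≥ 1 and κ ≥ 1. In the complete bipartite graph K_{γ,κ} (on vertex parts of sizes γ and κ), the number of pairs (v, w), where v is a vertex and w is a closed walk of length 6 from v to v all of whose 6 edges are pairwise distinct, equals 72 · C(γ,3) · C(κ,3). -/
/-!
A closed walk of length 6 in `K_{α,β}` starting in `α` visits `a₀ b₀ a₁ b₁ a₂ b₂ a₀`. Any two of
the `aᵢ` are the two neighbours along the walk of some `bⱼ`, and conversely, so the six edges are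
pairwise distinct exactly when the `aᵢ` are distinct and the `bᵢ` are distinct. Hence such trails
correspond to pairs of embeddings `Fin 3 ↪ α`, `Fin 3 ↪ β`, and likewise for those starting in `β`
(`hexTrail_bijective`). With `α = Fin γ` and `β = Fin κ` there are `3! C(γ,3) · 3! C(κ,3)` pairs of
embeddings, and the two possible sides of the starting vertex give the remaining factor 2.
-/

open SimpleGraph

/-- The closed trails of length 6 in the complete bipartite graph on `α ⊕ β`, each with its
starting vertex. -/
abbrev HexTrail (α β : Type*) : Type _ :=
  (v : α ⊕ β) × {w : (completeBipartiteGraph α β).Walk v v // w.length = 6 ∧ w.IsTrail}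

/-- The closed trail `a₀ b₀ a₁ b₁ a₂ b₂ a₀`, for the left summand, or `b₀ a₀ b₁ a₁ b₂ a₂ b₀`, for
the right one, attached to embeddings `a : Fin 3 ↪ α` and `b : Fin 3 ↪ β`. -/
def hexTrail {α β : Type*} :
    ((Fin 3 ↪ α) × (Fin 3 ↪ β)) ⊕ ((Fin 3 ↪ α) × (Fin 3 ↪ β)) → HexTrail α β
  | .inl (a, b) => ⟨.inl (a 0),
      .cons (v := .inr (b 0)) (by simp) <| .cons (v := .inl (a 1)) (by simp) <|
      .cons (v := .inr (b 1)) (by simp) <| .cons (v := .inl (a 2)) (by simp) <|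
      .cons (v := .inr (b 2)) (by simp) <| .cons (v := .inl (a 0)) (by simp) .nil,
      by simp, by simp [Walk.isTrail_def]⟩
  | .inr (a, b) => ⟨.inr (b 0),
      .cons (v := .inl (a 0)) (by simp) <| .cons (v := .inr (b 1)) (by simp) <|
      .cons (v := .inl (a 1)) (by simp) <| .cons (v := .inr (b 2)) (by simp) <|
      .cons (v := .inl (a 2)) (by simp) <| .cons (v := .inr (b 0)) (by simp) .nil,
      by simp, by simp [Walk.isTrail_def]⟩

/-- Three pairwise distinct elements form an embedding of `Fin 3`. -/
lemma exists_embedding_three {α : Type*} {x y z : α} (hxy : x ≠ y) (hyz : y ≠ z) (hxz : x ≠ z) :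
    ∃ a : Fin 3 ↪ α, a 0 = x ∧ a 1 = y ∧ a 2 = z := by
  refine ⟨⟨![x, y, z], ?_⟩, rfl, rfl, rfl⟩
  intro i j h
  fin_cases i <;> fin_cases j <;> simp_all

lemma hexTrail_injective {α β : Type*} : Function.Injective (hexTrail (α := α) (β := β)) := by
  intro x y h
  have hs : (hexTrail x).2.1.support = (hexTrail y).2.1.support := by rw [h]
  rcases x with ⟨a, b⟩ | ⟨a, b⟩ <;> rcases y with ⟨a', b'⟩ | ⟨a', b'⟩ <;>
    simp [hexTrail] at hs ⊢
  all_goals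
    constructor <;> ext i <;> fin_cases i <;> simp_all

lemma hexTrail_surjective {α β : Type*} : Function.Surjective (hexTrail (α := α) (β := β)) := by
  rintro ⟨v, w, hl, ht⟩
  rcases w with _ | ⟨h₁, _ | ⟨h₂, _ | ⟨h₃, _ | ⟨h₄, _ | ⟨h₅, _ | ⟨h₆, _ | ⟨h₇, w⟩⟩⟩⟩⟩⟩⟩ <;>
    simp at hl
  rename_i v₁ v₂ v₃ v₄ v₅ _
  -- Adjacency forces the sides of the six vertices to alternate.
  rcases v with p₀ | p₀ <;> rcases v₁ with p₁ | p₁ <;> simp at h₁ <;>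
    rcases v₂ with p₂ | p₂ <;> simp at h₂ <;> rcases v₃ with p₃ | p₃ <;> simp at h₃ <;>
    rcases v₄ with p₄ | p₄ <;> simp at h₄ <;> rcases v₅ with p₅ | p₅ <;> simp at h₅ h₆
  · obtain ⟨a, rfl, rfl, rfl⟩ : ∃ a : Fin 3 ↪ α, a 0 = p₀ ∧ a 1 = p₂ ∧ a 2 = p₄ := by
      apply exists_embedding_three <;> rintro rfl <;> simp [Walk.isTrail_def] at ht
    obtain ⟨b, rfl, rfl, rfl⟩ : ∃ b : Fin 3 ↪ β, b 0 = p₁ ∧ b 1 = p₃ ∧ b 2 = p₅ := by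
      apply exists_embedding_three <;> rintro rfl <;> simp [Walk.isTrail_def] at ht
    exact ⟨.inl (a, b), rfl⟩
  · obtain ⟨b, rfl, rfl, rfl⟩ : ∃ b : Fin 3 ↪ β, b 0 = p₀ ∧ b 1 = p₂ ∧ b 2 = p₄ := by
      apply exists_embedding_three <;> rintro rfl <;> simp [Walk.isTrail_def] at ht
    obtain ⟨a, rfl, rfl, rfl⟩ : ∃ a : Fin 3 ↪ α, a 0 = p₁ ∧ a 1 = p₃ ∧ a 2 = p₅ := by
      apply exists_embedding_three <;> rintro rfl <;> simp [Walk.isTrail_def] at ht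
    exact ⟨.inr (a, b), rfl⟩

lemma hexTrail_bijective {α β : Type*} : Function.Bijective (hexTrail (α := α) (β := β)) :=
  ⟨hexTrail_injective, hexTrail_surjective⟩

/-- in `K_{γ,κ}` the number of pairs `(v, w)` of a vertex `v` and a closed
walk `w` of length 6 from `v` to `v` with pairwise distinct edges is `72·C(γ,3)·C(κ,3)`. -/
theorem stmt13 (γ κ : ℕ) (hγ : 1 ≤ γ) (hκ : 1 ≤ κ) :
    Nat.card ((v : Fin γ ⊕ Fin κ) ×
        {w : (completeBipartiteGraph (Fin γ) (Fin κ)).Walk v v // w.length = 6 ∧ w.IsTrail})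
      = 72 * γ.choose 3 * κ.choose 3 := by
  rw [← Nat.card_congr (Equiv.ofBijective _ (hexTrail_bijective (α := Fin γ) (β := Fin κ)))]
  simp only [Nat.card_eq_fintype_card, Fintype.card_sum, Fintype.card_prod,
    Fintype.card_embedding_eq, Fintype.card_fin, Nat.descFactorial_eq_factorial_mul_choose,
    Nat.factorial]
  ring
end

section
/- Let γ ≥ 1 and κ ≥ 1. In the complete bipartite graph K_{γ,κ} (on vertex parts of sizes γ and κ), the number of pairs (v, w), where v is a vertex and w is a closed walk of length 8 from v to v all of whose 8 edges are pairwise distinct, equals 16 · ( 6C(γ,2)C(κ,4) + 6C(γ,4)C(κ,2) + 36C(γ,3)C(κ,4) + 36C(γ,4)C(κ,3) + 72C(γ,4)C(κ,4) ). -/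
/-!
A closed walk of length 8 in `K_{γ,κ}` alternates between the two parts, so it is given by the part
containing its base vertex together with the cyclic sequences `a 0, …, a 3` and `b 0, …, b 3` of its
vertices in the parts of sizes `γ` and `κ`. Its eight edges are distinct iff cyclically consecutive
entries of `a` differ, those of `b` differ, and there is no pair of opposite entries equal in `a`
together with one in `b`: if, say, `a 0 = a 2` and `b 0 = b 2`, then the edges `a 0 — b 0` and
`a 2 — b 2` coincide. So one of `a`, `b` is injective and the other is a proper colouring of the
4-cycle (`isTrail_inl_iff`, `isTrail_inr_iff`).

There are `24 C(n,4)` injective sequences, and `24 C(n,4) + 12 C(n,3) + 2 C(n,2)` proper colourings of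
the 4-cycle, sorted by which of the two opposite pairs coincide. Inclusion–exclusion gives
`8 · A₈` pairs `(a, b)`, and the choice of the part of the base vertex contributes a factor 2.
-/

open SimpleGraph

/-- `f` is a proper colouring of the 4-cycle: cyclically consecutive values differ. -/
abbrev CycProper {α : Type*} (f : Fin 4 → α) : Prop :=
  f 0 ≠ f 1 ∧ f 1 ≠ f 2 ∧ f 2 ≠ f 3 ∧ f 3 ≠ f 0

/-- The pairs of vertex sequences that come from trails: both sequences are proper colourings of the
4-cycle and at least one of them is injective. -/
abbrev GoodPair {α β : Type*} (p : (Fin 4 → α) × (Fin 4 → β)) : Prop :=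
  (Function.Injective p.1 ∧ CycProper p.2) ∨ (CycProper p.1 ∧ Function.Injective p.2)

lemma injective_fin_four {α : Type*} (f : Fin 4 → α) : Function.Injective f ↔
    CycProper f ∧ f 0 ≠ f 2 ∧ f 1 ≠ f 3 := by
  simp only [Function.Injective, Fin.forall_fin_succ, CycProper]
  simp
  grind

lemma injective_fin_three {α : Type*} (f : Fin 3 → α) : Function.Injective f ↔
    f 0 ≠ f 1 ∧ f 0 ≠ f 2 ∧ f 1 ≠ f 2 := by
  simp only [Function.Injective, Fin.forall_fin_succ]
  simp
  grind

lemma injective_fin_two {α : Type*} (f : Fin 2 → α) : Function.Injective f ↔ f 0 ≠ f 1 := by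
  simp only [Function.Injective, Fin.forall_fin_succ]
  simp
  grind

open Classical in
lemma card_injective (k n : ℕ) :
    (Finset.univ.filter fun f : Fin k → Fin n => Function.Injective f).card
      = k.factorial * n.choose k := by
  rw [← Nat.descFactorial_eq_factorial_mul_choose]
  have h := Fintype.card_embedding_eq (α := Fin k) (β := Fin n)
  rw [Fintype.card_fin, Fintype.card_fin] at h
  rw [← h, ← Fintype.card_subtype]
  exact Fintype.card_congr (Equiv.subtypeInjectiveEquivEmbedding _ _)

open Classical in
lemma card_cycProper (n : ℕ) :
    (Finset.univ.filter fun f : Fin 4 → Fin n => CycProper f).card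
      = 24 * n.choose 4 + 12 * n.choose 3 + 2 * n.choose 2 := by
  have h4 := card_injective 4 n
  have h3 := card_injective 3 n
  have h2 := card_injective 2 n
  have e02 : (Finset.univ.filter fun f : Fin 4 → Fin n =>
      (CycProper f ∧ f 0 = f 2) ∧ ¬ f 1 = f 3).card
      = (Finset.univ.filter fun f : Fin 3 → Fin n => Function.Injective f).card := by
    refine Finset.card_nbij' (fun f => ![f 0, f 1, f 3]) (fun g => ![g 0, g 1, g 0, g 2]) ?_ ?_ ?_ ?_
    · intro f; simp [injective_fin_three, CycProper]; grind
    · intro f; simp [injective_fin_three, CycProper]; grind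
    · intro f; simp [funext_iff, Fin.forall_fin_succ, CycProper]; grind
    · intro f; simp [funext_iff, Fin.forall_fin_succ]
  have e13 : (Finset.univ.filter fun f : Fin 4 → Fin n =>
      (CycProper f ∧ ¬ f 0 = f 2) ∧ f 1 = f 3).card
      = (Finset.univ.filter fun f : Fin 3 → Fin n => Function.Injective f).card := by
    refine Finset.card_nbij' (fun f => ![f 0, f 1, f 2]) (fun g => ![g 0, g 1, g 2, g 1]) ?_ ?_ ?_ ?_
    · intro f; simp [injective_fin_three, CycProper]; grind
    · intro f; simp [injective_fin_three, CycProper]; grind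
    · intro f; simp [funext_iff, Fin.forall_fin_succ, CycProper]
    · intro f; simp [funext_iff, Fin.forall_fin_succ]
  have eb : (Finset.univ.filter fun f : Fin 4 → Fin n =>
      (CycProper f ∧ f 0 = f 2) ∧ f 1 = f 3).card
      = (Finset.univ.filter fun f : Fin 2 → Fin n => Function.Injective f).card := by
    refine Finset.card_nbij' (fun f => ![f 0, f 1]) (fun g => ![g 0, g 1, g 0, g 1]) ?_ ?_ ?_ ?_
    · intro f; simp [injective_fin_two, CycProper]; grind
    · intro f; simp [injective_fin_two, CycProper]; grind
    · intro f; simp [funext_iff, Fin.forall_fin_succ, CycProper]; grind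
    · intro f; simp [funext_iff, Fin.forall_fin_succ]
  have en : (Finset.univ.filter fun f : Fin 4 → Fin n =>
      (CycProper f ∧ ¬ f 0 = f 2) ∧ ¬ f 1 = f 3).card
      = (Finset.univ.filter fun f : Fin 4 → Fin n => Function.Injective f).card := by
    congr 1; ext f; simp only [Finset.mem_filter, injective_fin_four]; tauto
  rw [← Finset.card_filter_add_card_filter_not (fun f : Fin 4 → Fin n => f 0 = f 2),
    Finset.filter_filter, Finset.filter_filter,
    ← Finset.card_filter_add_card_filter_not (s := Finset.univ.filter fun f : Fin 4 → Fin n =>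
      CycProper f ∧ f 0 = f 2) (fun f : Fin 4 → Fin n => f 1 = f 3),
    ← Finset.card_filter_add_card_filter_not (s := Finset.univ.filter fun f : Fin 4 → Fin n =>
      CycProper f ∧ ¬ f 0 = f 2) (fun f : Fin 4 → Fin n => f 1 = f 3)]
  simp only [Finset.filter_filter]
  rw [e02, e13, eb, en, h4, h3, h2]
  simp only [Nat.factorial]
  ring

lemma card_goodPair (γ κ : ℕ) :
    Nat.card {p : (Fin 4 → Fin γ) × (Fin 4 → Fin κ) // GoodPair p}
      = 8 * (6 * γ.choose 2 * κ.choose 4 + 6 * γ.choose 4 * κ.choose 2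
          + 36 * γ.choose 3 * κ.choose 4 + 36 * γ.choose 4 * κ.choose 3
          + 72 * γ.choose 4 * κ.choose 4) := by
  classical
  rw [Nat.card_eq_fintype_card, Fintype.card_subtype, Finset.filter_or]
  have key := Finset.card_union_add_card_inter
    (Finset.univ.filter fun p : (Fin 4 → Fin γ) × (Fin 4 → Fin κ) =>
      Function.Injective p.1 ∧ CycProper p.2)
    (Finset.univ.filter fun p : (Fin 4 → Fin γ) × (Fin 4 → Fin κ) =>
      CycProper p.1 ∧ Function.Injective p.2)
  have hi : (Finset.univ.filter fun p : (Fin 4 → Fin γ) × (Fin 4 → Fin κ) =>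
      Function.Injective p.1 ∧ CycProper p.2) ∩
    (Finset.univ.filter fun p : (Fin 4 → Fin γ) × (Fin 4 → Fin κ) =>
      CycProper p.1 ∧ Function.Injective p.2) =
    (Finset.univ.filter fun p : (Fin 4 → Fin γ) × (Fin 4 → Fin κ) =>
      Function.Injective p.1 ∧ Function.Injective p.2) := by
    ext p
    simp only [Finset.mem_inter, Finset.mem_filter, injective_fin_four]
    tauto
  have prod (P : (Fin 4 → Fin γ) → Prop) (Q : (Fin 4 → Fin κ) → Prop)
      [DecidablePred P] [DecidablePred Q] :
      (Finset.univ.filter fun p : (Fin 4 → Fin γ) × (Fin 4 → Fin κ) => P p.1 ∧ Q p.2).card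
        = (Finset.univ.filter P).card * (Finset.univ.filter Q).card := by
    rw [← Finset.card_product, ← Finset.filter_product, Finset.univ_product_univ]
  rw [hi, prod Function.Injective CycProper, prod CycProper Function.Injective,
    prod Function.Injective Function.Injective, card_injective, card_injective, card_cycProper, card_cycProper] at key
  simp only [Nat.factorial] at key
  linarith

section Walks

variable {α β : Type*}

/-- The closed walk `a 0, b 0, a 1, b 1, …, a 3, b 3, a 0`. -/
def walkInl (a : Fin 4 → α) (b : Fin 4 → β) :
    (completeBipartiteGraph α β).Walk (.inl (a 0)) (.inl (a 0)) :=
  .cons (v := .inr (b 0)) (by simp) <| .cons (v := .inl (a 1)) (by simp) <|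
  .cons (v := .inr (b 1)) (by simp) <| .cons (v := .inl (a 2)) (by simp) <|
  .cons (v := .inr (b 2)) (by simp) <| .cons (v := .inl (a 3)) (by simp) <|
  .cons (v := .inr (b 3)) (by simp) <| .cons (v := .inl (a 0)) (by simp) .nil

/-- The closed walk `b 0, a 0, b 1, a 1, …, b 3, a 3, b 0`. -/
def walkInr (a : Fin 4 → α) (b : Fin 4 → β) :
    (completeBipartiteGraph α β).Walk (.inr (b 0)) (.inr (b 0)) :=
  .cons (v := .inl (a 0)) (by simp) <| .cons (v := .inr (b 1)) (by simp) <|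
  .cons (v := .inl (a 1)) (by simp) <| .cons (v := .inr (b 2)) (by simp) <|
  .cons (v := .inl (a 2)) (by simp) <| .cons (v := .inr (b 3)) (by simp) <|
  .cons (v := .inl (a 3)) (by simp) <| .cons (v := .inr (b 0)) (by simp) .nil

lemma isTrail_inl_iff (a : Fin 4 → α) (b : Fin 4 → β) :
    (walkInl a b).IsTrail ↔ GoodPair (a, b) := by
  simp only [GoodPair, injective_fin_four, CycProper]
  simp [Walk.isTrail_def, walkInl]
  grind

lemma isTrail_inr_iff (a : Fin 4 → α) (b : Fin 4 → β) :
    (walkInr a b).IsTrail ↔ GoodPair (a, b) := by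
  simp only [GoodPair, injective_fin_four, CycProper]
  simp [Walk.isTrail_def, walkInr]
  grind

/-- A walk of length 8, written out vertex by vertex. -/
lemma exists_eq_cons_of_length_eq_eight {V : Type*} {G : SimpleGraph V} {u v : V} (w : G.Walk u v)
    (hw : w.length = 8) : ∃ (x₁ x₂ x₃ x₄ x₅ x₆ x₇ : V) (h₁ : G.Adj u x₁) (h₂ : G.Adj x₁ x₂)
      (h₃ : G.Adj x₂ x₃) (h₄ : G.Adj x₃ x₄) (h₅ : G.Adj x₄ x₅) (h₆ : G.Adj x₅ x₆)
      (h₇ : G.Adj x₆ x₇) (h₈ : G.Adj x₇ v),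
      w = .cons h₁ (.cons h₂ (.cons h₃ (.cons h₄ (.cons h₅ (.cons h₆ (.cons h₇
        (.cons h₈ .nil))))))) := by
  obtain _ | ⟨h₁, w⟩ := w
  · simp at hw
  obtain _ | ⟨h₂, w⟩ := w
  · simp at hw
  obtain _ | ⟨h₃, w⟩ := w
  · simp at hw
  obtain _ | ⟨h₄, w⟩ := w
  · simp at hw
  obtain _ | ⟨h₅, w⟩ := w
  · simp at hw
  obtain _ | ⟨h₆, w⟩ := w
  · simp at hw
  obtain _ | ⟨h₇, w⟩ := w
  · simp at hw
  obtain _ | ⟨h₈, w⟩ := w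
  · simp at hw
  obtain _ | ⟨h₉, w⟩ := w
  · exact ⟨_, _, _, _, _, _, _, h₁, h₂, h₃, h₄, h₅, h₆, h₇, h₈, rfl⟩
  · simp at hw

lemma exists_eq_walkInl {x : α}
    (w : (completeBipartiteGraph α β).Walk (.inl x) (.inl x)) (hw : w.length = 8) :
    ∃ (a : Fin 4 → α) (b : Fin 4 → β), (⟨.inl x, w⟩ : (v : α ⊕ β) ×
      (completeBipartiteGraph α β).Walk v v) = ⟨.inl (a 0), walkInl a b⟩ := by
  obtain ⟨x₁, x₂, x₃, x₄, x₅, x₆, x₇, h₁, h₂, h₃, h₄, h₅, h₆, h₇, h₈, rfl⟩ :=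
    exists_eq_cons_of_length_eq_eight w hw
  obtain x₁ | x₁ := x₁
  · simp at h₁
  obtain x₂ | x₂ := x₂
  swap
  · simp at h₂
  obtain x₃ | x₃ := x₃
  · simp at h₃
  obtain x₄ | x₄ := x₄
  swap
  · simp at h₄
  obtain x₅ | x₅ := x₅
  · simp at h₅
  obtain x₆ | x₆ := x₆
  swap
  · simp at h₆
  obtain x₇ | x₇ := x₇
  · simp at h₇
  exact ⟨![x, x₂, x₄, x₆], ![x₁, x₃, x₅, x₇], rfl⟩

lemma exists_eq_walkInr {x : β}
    (w : (completeBipartiteGraph α β).Walk (.inr x) (.inr x)) (hw : w.length = 8) :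
    ∃ (a : Fin 4 → α) (b : Fin 4 → β), (⟨.inr x, w⟩ : (v : α ⊕ β) ×
      (completeBipartiteGraph α β).Walk v v) = ⟨.inr (b 0), walkInr a b⟩ := by
  obtain ⟨x₁, x₂, x₃, x₄, x₅, x₆, x₇, h₁, h₂, h₃, h₄, h₅, h₆, h₇, h₈, rfl⟩ :=
    exists_eq_cons_of_length_eq_eight w hw
  obtain x₁ | x₁ := x₁
  swap
  · simp at h₁
  obtain x₂ | x₂ := x₂
  · simp at h₂
  obtain x₃ | x₃ := x₃
  swap
  · simp at h₃
  obtain x₄ | x₄ := x₄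
  · simp at h₄
  obtain x₅ | x₅ := x₅
  swap
  · simp at h₅
  obtain x₆ | x₆ := x₆
  · simp at h₆
  obtain x₇ | x₇ := x₇
  swap
  · simp at h₇
  exact ⟨![x₁, x₃, x₅, x₇], ![x, x₂, x₄, x₆], rfl⟩

/-- The closed trail of length 8 with given vertex sequences, based in the first part for
`Sum.inl` and in the second part for `Sum.inr`. -/
def toTrail : {p : (Fin 4 → α) × (Fin 4 → β) // GoodPair p} ⊕
      {p : (Fin 4 → α) × (Fin 4 → β) // GoodPair p} →
    (v : α ⊕ β) × {w : (completeBipartiteGraph α β).Walk v v // w.length = 8 ∧ w.IsTrail}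
  | .inl p => ⟨.inl (p.1.1 0), walkInl p.1.1 p.1.2, rfl, (isTrail_inl_iff _ _).2 p.2⟩
  | .inr p => ⟨.inr (p.1.2 0), walkInr p.1.1 p.1.2, rfl, (isTrail_inr_iff _ _).2 p.2⟩

lemma toTrail_bijective : Function.Bijective (toTrail (α := α) (β := β)) := by
  constructor
  · intro p q h
    -- The list of visited vertices already determines the two sequences.
    have hs := congrArg (fun s => s.2.1.support) h
    obtain ⟨⟨a, b⟩, hp⟩ | ⟨⟨a, b⟩, hp⟩ := p <;> obtain ⟨⟨a', b'⟩, hq⟩ | ⟨⟨a', b'⟩, hq⟩ := q <;>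
      simp [toTrail, walkInl, walkInr] at hs
    all_goals
      simp only [Sum.inl.injEq, Sum.inr.injEq, Subtype.mk.injEq, Prod.mk.injEq, funext_iff,
        Fin.forall_fin_succ]
      simp
      tauto
  · rintro ⟨x | x, w, hl, ht⟩
    · obtain ⟨a, b, h⟩ := exists_eq_walkInl w hl
      obtain ⟨h₁, h₂⟩ := Sigma.mk.inj h
      obtain rfl := Sum.inl.inj h₁
      obtain rfl := eq_of_heq h₂
      exact ⟨.inl ⟨(a, b), (isTrail_inl_iff a b).1 ht⟩, rfl⟩
    · obtain ⟨a, b, h⟩ := exists_eq_walkInr w hl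
      obtain ⟨h₁, h₂⟩ := Sigma.mk.inj h
      obtain rfl := Sum.inr.inj h₁
      obtain rfl := eq_of_heq h₂
      exact ⟨.inr ⟨(a, b), (isTrail_inr_iff a b).1 ht⟩, rfl⟩

end Walks

/-- in `K_{γ,κ}` the number of pairs `(v, w)` of a vertex `v` and a closed
walk `w` of length 8 from `v` to `v` with pairwise distinct edges is `16·A₈`. -/
theorem stmt14 (γ κ : ℕ) (hγ : 1 ≤ γ) (hκ : 1 ≤ κ) :
    Nat.card ((v : Fin γ ⊕ Fin κ) ×
        {w : (completeBipartiteGraph (Fin γ) (Fin κ)).Walk v v // w.length = 8 ∧ w.IsTrail})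
      = 16 * (6 * γ.choose 2 * κ.choose 4 + 6 * γ.choose 4 * κ.choose 2
          + 36 * γ.choose 3 * κ.choose 4 + 36 * γ.choose 4 * κ.choose 3
          + 72 * γ.choose 4 * κ.choose 4) := by
  rw [← Nat.card_eq_of_bijective _ (toTrail_bijective (α := Fin γ) (β := Fin κ)), Nat.card_sum,
    card_goodPair]
  ring
end
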